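/- arXiv:1211.0414 — 2 statements merged into one kernel-verified Lean document; each statement's English description precedes it below -/
import Mathlib

section
/- Let (H,d) be a Hadamard space and let C ⊂ H and C_n ⊂ H (n ∈ ℕ) be nonempty closed convex sets. If the sequence (C_n) Mosco-converges to C (i.e., the indicator functions ι_{C_n} converge to ι_C in the sense of Mosco), then for every x ∈ H: (1) d(x,C_n) → d(x,C), and (2) P_{C_n}(x) → P_C(x) in H. -/
open Filter Topology
open scoped Classical

/-- `γ`, restricted to `[0,1]`, is an affinely parametrized geodesic. -/
def IsGeodesic {H : Type*} [MetricSpace H] (γ : ℝ → H) : Prop :=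
  ∀ s ∈ Set.Icc (0:ℝ) 1, ∀ t ∈ Set.Icc (0:ℝ) 1,
    dist (γ s) (γ t) = |s - t| * dist (γ 0) (γ 1)

/-- A Hadamard space: a complete geodesic metric space satisfying the CAT(0) inequality. -/
structure HadamardSpace (H : Type*) [MetricSpace H] [CompleteSpace H] : Prop where
  geodesic : ∀ x y : H, ∃ γ : ℝ → H, IsGeodesic γ ∧ γ 0 = x ∧ γ 1 = y
  cat0 : ∀ (x : H) (γ : ℝ → H), IsGeodesic γ → ∀ t ∈ Set.Icc (0:ℝ) 1,
      dist x (γ t) ^ 2 ≤ (1 - t) * dist x (γ 0) ^ 2 + t * dist x (γ 1) ^ 2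
        - t * (1 - t) * dist (γ 0) (γ 1) ^ 2

/-- A set is (geodesically) convex if it contains every geodesic segment between its points. -/
def GeodesicConvex {H : Type*} [MetricSpace H] (C : Set H) : Prop :=
  ∀ γ : ℝ → H, IsGeodesic γ → γ 0 ∈ C → γ 1 ∈ C → ∀ t ∈ Set.Icc (0:ℝ) 1, γ t ∈ C

/-- A function `f : H → (−∞,∞]` is convex if it is convex along every geodesic. -/
def ConvexFun {H : Type*} [MetricSpace H] (f : H → EReal) : Prop :=
  ∀ γ : ℝ → H, IsGeodesic γ → ∀ t ∈ Set.Icc (0:ℝ) 1,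
    f (γ t) ≤ ((1 - t : ℝ) : EReal) * f (γ 0) + ((t : ℝ) : EReal) * f (γ 1)

/-- `f` is strongly convex with parameter `β > 0`. -/
def StronglyConvexWith {H : Type*} [MetricSpace H] (β : ℝ) (f : H → EReal) : Prop :=
  ∀ γ : ℝ → H, IsGeodesic γ → ∀ t ∈ Set.Icc (0:ℝ) 1,
    f (γ t) ≤ ((1 - t : ℝ) : EReal) * f (γ 0) + ((t : ℝ) : EReal) * f (γ 1)
      - ((β * (t * (1 - t)) * dist (γ 0) (γ 1) ^ 2 : ℝ) : EReal)

/-- `f : H → (−∞,∞]` is proper (not identically `∞`, never `−∞`), convex and lsc. -/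
def ProperConvexLsc {H : Type*} [MetricSpace H] (f : H → EReal) : Prop :=
  (∃ x, f x ≠ ⊤) ∧ (∀ x, f x ≠ ⊥) ∧ ConvexFun f ∧ LowerSemicontinuous f

/-- `c` is an asymptotic center of the (bounded) sequence `x`:
it minimizes `y ↦ limsup_n d(y, x_n)²`. -/
def IsAsymptoticCenter {H : Type*} [MetricSpace H] (x : ℕ → H) (c : H) : Prop :=
  ∀ y : H, limsup (fun n => dist c (x n) ^ 2) atTop ≤ limsup (fun n => dist y (x n) ^ 2) atTop

/-- `x` weakly converges to `c` if `c` is the asymptotic center of every subsequence of `x`. -/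
def WeakConvSeq {H : Type*} [MetricSpace H] (x : ℕ → H) (c : H) : Prop :=
  ∀ φ : ℕ → ℕ, StrictMono φ → IsAsymptoticCenter (x ∘ φ) c

/-- Mosco convergence of `fn` to `f`. -/
def MoscoConv {H : Type*} [MetricSpace H] (fn : ℕ → H → EReal) (f : H → EReal) : Prop :=
  (∀ (x : H) (xs : ℕ → H), Bornology.IsBounded (Set.range xs) → WeakConvSeq xs x →
      f x ≤ liminf (fun n => fn n (xs n)) atTop) ∧
  (∀ x : H, ∃ ys : ℕ → H, Tendsto ys atTop (𝓝 x) ∧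
      Tendsto (fun n => fn n (ys n)) atTop (𝓝 (f x)))

/-- `p` is the resolvent `J_λ x` of `f` at `x`: it minimizes `y ↦ f(y) + d(x,y)²/(2λ)`. -/
def IsResolventPt {H : Type*} [MetricSpace H] (f : H → EReal) (lam : ℝ) (x p : H) : Prop :=
  ∀ y : H, f p + ((dist x p ^ 2 / (2 * lam) : ℝ) : EReal)
    ≤ f y + ((dist x y ^ 2 / (2 * lam) : ℝ) : EReal)

/-- The Moreau–Yosida envelope `f_λ(x) = inf_y [f(y) + d(x,y)²/(2λ)]`. -/
noncomputable def MoreauEnv {H : Type*} [MetricSpace H] (f : H → EReal) (lam : ℝ) (x : H) :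
    EReal :=
  ⨅ y : H, f y + ((dist x y ^ 2 / (2 * lam) : ℝ) : EReal)

/-- `p` is the metric projection of `x` onto `C`. -/
def IsProjPt {H : Type*} [MetricSpace H] (C : Set H) (x p : H) : Prop :=
  p ∈ C ∧ ∀ c ∈ C, dist x p ≤ dist x c

/-- The indicator function of a set, with values in `(−∞,∞]`. -/
noncomputable def indicatorE {H : Type*} (C : Set H) : H → EReal :=
  fun x => if x ∈ C then (0 : EReal) else ⊤

/-- `y = S_t x` is the gradient-flow semigroup value:
the limit of the iterated resolvents `(J_{t/n})^{(n)} x`. -/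
def IsGradientFlowPt {H : Type*} [MetricSpace H] (J : ℝ → H → H) (t : ℝ) (x y : H) : Prop :=
  Tendsto (fun n : ℕ => (J (t / (n : ℝ)))^[n] x) atTop (𝓝 y)

/-- The functional `y ↦ limsup d(y, u)²` along a filter; its minimizers are asymptotic centers. -/
noncomputable def limsupSqDist {α H : Type*} [MetricSpace H] (u : α → H) (F : Filter α) (y : H) :
    ℝ :=
  limsup (fun n => dist y (u n) ^ 2) F

section LimsupSqDist

variable {α H : Type*} [MetricSpace H] {u : α → H} {F G : Filter α} {o y : H} {B a : ℝ}

theorem dist_le_of_bound (hB : ∀ n, dist o (u n) ≤ B) (y : H) (n : α) :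
    dist y (u n) ≤ dist y o + B :=
  (dist_triangle y o (u n)).trans (by linarith [hB n])

theorem isBoundedUnder_sqDist (hB : ∀ n, dist o (u n) ≤ B) (y : H) :
    F.IsBoundedUnder (· ≤ ·) (fun n => dist y (u n) ^ 2) :=
  isBoundedUnder_of ⟨(dist y o + B) ^ 2, fun n =>
    pow_le_pow_left₀ dist_nonneg (dist_le_of_bound hB y n) 2⟩

theorem isBoundedUnder_ge_sqDist (y : H) :
    F.IsBoundedUnder (· ≥ ·) (fun n => dist y (u n) ^ 2) :=
  isBoundedUnder_of ⟨0, fun _ => sq_nonneg _⟩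

theorem limsupSqDist_le [F.NeBot] (h : ∀ᶠ n in F, dist y (u n) ^ 2 ≤ a) :
    limsupSqDist u F y ≤ a :=
  limsup_le_of_le (isBoundedUnder_ge_sqDist y).isCoboundedUnder_le h

theorem eventually_lt_of_limsupSqDist_lt (hB : ∀ n, dist o (u n) ≤ B)
    (h : limsupSqDist u F y < a) : ∀ᶠ n in F, dist y (u n) ^ 2 < a :=
  eventually_lt_of_limsup_lt h (isBoundedUnder_sqDist hB y)

theorem limsupSqDist_nonneg [F.NeBot] (hB : ∀ n, dist o (u n) ≤ B) (y : H) :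
    0 ≤ limsupSqDist u F y := by
  refine le_of_forall_gt fun a ha => ?_
  obtain ⟨n, hn⟩ := (eventually_lt_of_limsupSqDist_lt hB ha).exists
  exact (sq_nonneg _).trans_lt hn

theorem limsupSqDist_mono [F.NeBot] (hB : ∀ n, dist o (u n) ≤ B) (h : F ≤ G) (y : H) :
    limsupSqDist u F y ≤ limsupSqDist u G y :=
  le_of_forall_gt_imp_ge_of_dense fun _ ha =>
    limsupSqDist_le (((eventually_lt_of_limsupSqDist_lt hB ha).filter_mono h).mono fun _ hn => le_of_lt hn)

theorem limsupSqDist_le_add [F.NeBot] (hB : ∀ n, dist o (u n) ≤ B) (y z : H) :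
    limsupSqDist u F z ≤
      limsupSqDist u F y + dist z y * (dist z y + 2 * (dist y o + B)) := by
  refine le_of_forall_pos_le_add fun ε hε => limsupSqDist_le ?_
  filter_upwards [eventually_lt_of_limsupSqDist_lt hB
    (lt_add_of_pos_right (limsupSqDist u F y) hε)] with n hn
  have h1 := dist_le_of_bound hB y n
  have h2 := dist_triangle z y (u n)
  have h3 : dist z (u n) ^ 2 ≤ (dist z y + dist y (u n)) ^ 2 :=
    pow_le_pow_left₀ dist_nonneg h2 2
  have h4 := mul_le_mul_of_nonneg_left h1 (dist_nonneg (x := z) (y := y))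
  nlinarith

theorem bddBelow_limsupSqDist [F.NeBot] (hB : ∀ n, dist o (u n) ≤ B) :
    BddBelow (Set.range (limsupSqDist u F)) :=
  ⟨0, by rintro _ ⟨y, rfl⟩; exact limsupSqDist_nonneg hB y⟩

variable [CompleteSpace H]

theorem limsupSqDist_geodesic_le (hH : HadamardSpace H) [F.NeBot] (hB : ∀ n, dist o (u n) ≤ B)
    {γ : ℝ → H} (hγ : IsGeodesic γ) {t : ℝ} (ht : t ∈ Set.Icc (0 : ℝ) 1) :
    limsupSqDist u F (γ t) ≤ (1 - t) * limsupSqDist u F (γ 0) + t * limsupSqDist u F (γ 1)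
      - t * (1 - t) * dist (γ 0) (γ 1) ^ 2 := by
  refine le_of_forall_pos_le_add fun ε hε => limsupSqDist_le ?_
  filter_upwards [eventually_lt_of_limsupSqDist_lt hB
      (lt_add_of_pos_right (limsupSqDist u F (γ 0)) hε),
    eventually_lt_of_limsupSqDist_lt hB
      (lt_add_of_pos_right (limsupSqDist u F (γ 1)) hε)] with n h0 h1
  have h := hH.cat0 (u n) γ hγ t ht
  simp only [dist_comm (u n)] at h
  have h0' := mul_le_mul_of_nonneg_left h0.le (sub_nonneg.2 ht.2)
  have h1' := mul_le_mul_of_nonneg_left h1.le ht.1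
  linarith

theorem sq_dist_le_limsupSqDist (hH : HadamardSpace H) [F.NeBot] (hB : ∀ n, dist o (u n) ≤ B)
    {c : H} (hc : ∀ y, limsupSqDist u F c ≤ limsupSqDist u F y) (x : H) :
    dist c x ^ 2 ≤ limsupSqDist u F x := by
  obtain ⟨γ, hγ, rfl, rfl⟩ := hH.geodesic c x
  have key : ∀ t ∈ Set.Ioc (0 : ℝ) 1, (1 - t) * dist (γ 0) (γ 1) ^ 2 ≤ limsupSqDist u F (γ 1) := by
    intro t ht
    have h1 := limsupSqDist_geodesic_le (F := F) hH hB hγ ⟨ht.1.le, ht.2⟩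
    have h2 := hc (γ t)
    have h3 := limsupSqDist_nonneg (F := F) hB (γ 0)
    have h4 : t * ((1 - t) * dist (γ 0) (γ 1) ^ 2) ≤ t * limsupSqDist u F (γ 1) := by
      nlinarith [mul_nonneg ht.1.le h3]
    exact le_of_mul_le_mul_left h4 ht.1
  have hlim : Tendsto (fun t : ℝ => (1 - t) * dist (γ 0) (γ 1) ^ 2) (𝓝[>] 0)
      (𝓝 ((1 - 0) * dist (γ 0) (γ 1) ^ 2)) :=
    (Continuous.tendsto (by fun_prop) 0).mono_left nhdsWithin_le_nhds
  have := le_of_tendsto hlim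
    (Filter.mem_of_superset (Ioc_mem_nhdsGT (zero_lt_one' ℝ)) key)
  simpa using this

theorem exists_minimizer_limsupSqDist (hH : HadamardSpace H) [F.NeBot]
    (hB : ∀ n, dist o (u n) ≤ B) :
    ∃ c, ∀ y, limsupSqDist u F c ≤ limsupSqDist u F y := by
  have : Nonempty H := ⟨o⟩
  set r := ⨅ y, limsupSqDist u F y
  have hr : ∀ y, r ≤ limsupSqDist u F y := ciInf_le (bddBelow_limsupSqDist hB)
  have hex : ∀ k : ℕ, ∃ y, limsupSqDist u F y < r + 1 / ((k : ℝ) + 1) := fun k =>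
    exists_lt_of_ciInf_lt (lt_add_of_pos_right _ Nat.one_div_pos_of_nat)
  choose v hv using hex
  have hdist : ∀ j k : ℕ,
      dist (v j) (v k) ^ 2 ≤ 2 * (1 / ((j : ℝ) + 1)) + 2 * (1 / ((k : ℝ) + 1)) := by
    intro j k
    obtain ⟨γ, hγ, h0, h1⟩ := hH.geodesic (v j) (v k)
    have h := limsupSqDist_geodesic_le (F := F) hH hB hγ (t := 1 / 2) (by norm_num)
    rw [h0, h1] at h
    linarith [hr (γ (1 / 2)), hv j, hv k]
  have hcauchy : CauchySeq v := by
    refine cauchySeq_of_le_tendsto_0 (fun N : ℕ => √(4 * (1 / ((N : ℝ) + 1)))) ?_ ?_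
    · intro j k N hj hk
      refine Real.le_sqrt_of_sq_le ((hdist j k).trans ?_)
      linarith [Nat.one_div_le_one_div (α := ℝ) hj, Nat.one_div_le_one_div (α := ℝ) hk]
    · have h := ((tendsto_one_div_add_atTop_nhds_zero_nat (𝕜 := ℝ)).const_mul 4).sqrt
      simpa using h
  obtain ⟨c, hc⟩ := cauchySeq_tendsto_of_complete hcauchy
  refine ⟨c, fun y => le_trans ?_ (hr y)⟩
  have hcv : Tendsto (fun k => dist c (v k)) atTop (𝓝 0) := by
    simpa using (tendsto_const_nhds (x := c)).dist hc
  have hlim : Tendsto (fun k : ℕ => r + 1 / ((k : ℝ) + 1)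
      + dist c (v k) * (dist c (v k) + 2 * (dist (v k) o + B))) atTop
      (𝓝 (r + 0 + 0 * (0 + 2 * (dist c o + B)))) :=
    (tendsto_const_nhds.add tendsto_one_div_add_atTop_nhds_zero_nat).add
      (hcv.mul (hcv.add (((hc.dist tendsto_const_nhds).add_const B).const_mul 2)))
  have := ge_of_tendsto' hlim fun k =>
    (limsupSqDist_le_add (F := F) hB (v k) c).trans (by linarith [hv k])
  simpa using this

end LimsupSqDist

/-- A nonnegative monotone function of filters attains a minimum, in the sense of passing to
finer countably generated filters, below every countably generated filter. -/
theorem exists_le_filter_forall_le {α : Type*} (R : Filter α → ℝ)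
    (h0 : ∀ F : Filter α, F.NeBot → 0 ≤ R F)
    (hmono : ∀ F G : Filter α, F.NeBot → F ≤ G → R F ≤ R G)
    (F₀ : Filter α) (hne : F₀.NeBot) (hcg : F₀.IsCountablyGenerated) :
    ∃ F ≤ F₀, F.NeBot ∧ F.IsCountablyGenerated ∧
      ∀ G ≤ F, G.NeBot → G.IsCountablyGenerated → R F ≤ R G := by
  have step : ∀ (k : ℕ) (F : {F : Filter α // F.NeBot ∧ F.IsCountablyGenerated}),
      ∃ F' : {F : Filter α // F.NeBot ∧ F.IsCountablyGenerated}, F'.1 ≤ F.1 ∧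
        ∀ G ≤ F.1, G.NeBot → G.IsCountablyGenerated → R F'.1 ≤ R G + 1 / ((k : ℝ) + 1) := by
    intro k F
    set A := R '' {G | G ≤ F.1 ∧ G.NeBot ∧ G.IsCountablyGenerated}
    have hA : BddBelow A := ⟨0, by rintro _ ⟨G, hG, rfl⟩; exact h0 G hG.2.1⟩
    have hAne : A.Nonempty := ⟨R F.1, F.1, ⟨le_rfl, F.2⟩, rfl⟩
    obtain ⟨_, ⟨F', hF', rfl⟩, hlt⟩ := exists_lt_of_csInf_lt hAne
      (lt_add_of_pos_right (sInf A) (Nat.one_div_pos_of_nat (α := ℝ) (n := k)))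
    refine ⟨⟨F', hF'.2⟩, hF'.1, fun G hG hGne hGcg => ?_⟩
    have := csInf_le hA ⟨G, ⟨hG, hGne, hGcg⟩, rfl⟩
    exact hlt.le.trans (by linarith)
  choose next hle hnext using step
  let S : ℕ → {F : Filter α // F.NeBot ∧ F.IsCountablyGenerated} :=
    fun n => Nat.rec ⟨F₀, hne, hcg⟩ next n
  have hanti : Antitone fun n => (S n).1 := antitone_nat_of_succ_le fun n => hle n (S n)
  have hSne : ∀ n, (S n).1.NeBot := fun n => (S n).2.1
  have hScg : ∀ n, (S n).1.IsCountablyGenerated := fun n => (S n).2.2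
  have hinf : (⨅ n, (S n).1).NeBot :=
    iInf_neBot_of_directed' hanti.directed_ge hSne
  refine ⟨⨅ n, (S n).1, iInf_le _ 0, hinf, inferInstance, fun G hG hGne hGcg => ?_⟩
  have hlim : Tendsto (fun k : ℕ => R G + 1 / ((k : ℝ) + 1)) atTop (𝓝 (R G + 0)) :=
    tendsto_const_nhds.add tendsto_one_div_add_atTop_nhds_zero_nat
  have := ge_of_tendsto' hlim fun k =>
    (hmono _ _ hinf (iInf_le _ (k + 1))).trans
      (hnext k (S k) G (hG.trans (iInf_le _ k)) hGne hGcg)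
  simpa using this

/-- Bounded sequences have weakly convergent subsequences. The subsequence is given by an infinite
index set, the sequence being constantly equal to the limit elsewhere. -/
theorem exists_weakConvSeq_piecewise {H : Type*} [MetricSpace H] [CompleteSpace H]
    (hH : HadamardSpace H) {u : ℕ → H} {o : H} {B : ℝ} (hB : ∀ n, dist o (u n) ≤ B)
    {T : Set ℕ} (hT : ∃ᶠ n in atTop, n ∈ T) :
    ∃ (c : H) (S : Set ℕ), S ⊆ T ∧ (∃ᶠ n in atTop, n ∈ S) ∧
      (∀ x : H, dist c x ^ 2 ≤ limsupSqDist u (atTop ⊓ 𝓟 S) x) ∧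
      WeakConvSeq (fun n => if n ∈ S then u n else c) c := by
  have : Nonempty H := ⟨o⟩
  obtain ⟨F, hF, hFne, hFcg, hmin⟩ := exists_le_filter_forall_le
    (fun F => ⨅ y, limsupSqDist u F y)
    (fun F _ => le_ciInf fun y => limsupSqDist_nonneg hB y)
    (fun F G _ h => ciInf_mono (bddBelow_limsupSqDist hB) fun y => limsupSqDist_mono hB h y)
    (atTop ⊓ 𝓟 T) (frequently_mem_iff_neBot.1 hT) inferInstance
  obtain ⟨c, hc⟩ := exists_minimizer_limsupSqDist (F := F) hH hB
  obtain ⟨φ, hφ⟩ := F.exists_seq_tendsto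
  have hφ' := tendsto_inf.1 (hφ.mono_right hF)
  obtain ⟨N, hN⟩ := eventually_atTop.1 (tendsto_principal.1 hφ'.2)
  let S : Set ℕ := φ '' Set.Ici N
  have hSfreq : ∃ᶠ n in atTop, n ∈ S :=
    hφ'.1.frequently (Eventually.frequently
      ((eventually_ge_atTop N).mono fun n hn => Set.mem_image_of_mem φ hn))
  have hSF : atTop ⊓ 𝓟 S ≤ F := by
    intro A hA
    obtain ⟨M, hM⟩ := eventually_atTop.1 (hφ hA)
    rw [mem_inf_principal]
    have hfin : (φ '' Set.Iio M).Finite := (Set.finite_Iio M).image φ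
    filter_upwards [Nat.cofinite_eq_atTop ▸ hfin.compl_mem_cofinite] with n hn
    rintro ⟨k, -, rfl⟩
    exact hM k (not_lt.1 fun hk => hn ⟨k, hk, rfl⟩)
  have hcenter : ∀ G ≤ atTop ⊓ 𝓟 S, G.NeBot → G.IsCountablyGenerated →
      ∀ y, limsupSqDist u G c ≤ limsupSqDist u G y := by
    intro G hG hGne hGcg y
    calc limsupSqDist u G c ≤ limsupSqDist u F c := limsupSqDist_mono hB (hG.trans hSF) c
      _ ≤ ⨅ y, limsupSqDist u F y := le_ciInf hc
      _ ≤ ⨅ y, limsupSqDist u G y := hmin G (hG.trans hSF) hGne hGcg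
      _ ≤ limsupSqDist u G y := ciInf_le (bddBelow_limsupSqDist hB) y
  have hSne : (atTop ⊓ 𝓟 S).NeBot := frequently_mem_iff_neBot.1 hSfreq
  refine ⟨c, S, ?_, hSfreq, sq_dist_le_limsupSqDist hH hB (hcenter _ le_rfl hSne inferInstance), ?_⟩
  · rintro _ ⟨k, hk, rfl⟩
    exact hN k hk
  intro ψ hψ y
  set w : ℕ → H := fun n => if n ∈ S then u n else c
  have hwS : ∀ n ∈ S, w n = u n := fun n hn => if_pos hn
  have hwB : ∀ n, dist o (w n) ≤ max B (dist o c) := by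
    intro n
    by_cases hn : n ∈ S
    · rw [hwS n hn]; exact (hB n).trans (le_max_left _ _)
    · simp [w, hn]
  change limsupSqDist w (map ψ atTop) c ≤ limsupSqDist w (map ψ atTop) y
  refine le_of_forall_gt_imp_ge_of_dense fun a ha => limsupSqDist_le ?_
  have ha0 : 0 ≤ a := (limsupSqDist_nonneg hwB y).trans ha.le
  have hya := eventually_lt_of_limsupSqDist_lt hwB ha
  have hca : ∀ᶠ n in map ψ atTop ⊓ 𝓟 S, dist c (u n) ^ 2 ≤ a := by
    rcases eq_or_neBot (map ψ atTop ⊓ 𝓟 S) with hbot | hGne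
    · simp [hbot]
    have hlt : limsupSqDist u (map ψ atTop ⊓ 𝓟 S) c < a := by
      obtain ⟨b, hb, hba⟩ := exists_between ha
      refine lt_of_le_of_lt ((hcenter _ (inf_le_inf_right _ hψ.tendsto_atTop) hGne
        inferInstance y).trans (limsupSqDist_le ?_)) hba
      rw [eventually_inf_principal]
      filter_upwards [eventually_lt_of_limsupSqDist_lt hwB hb] with n hn hnS
      rw [← hwS n hnS]
      exact hn.le
    exact (eventually_lt_of_limsupSqDist_lt hB hlt).mono fun _ hn => hn.le
  rw [eventually_inf_principal] at hca
  filter_upwards [hca] with n hn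
  by_cases hnS : n ∈ S
  · rw [hwS n hnS]; exact hn hnS
  · simpa [w, hnS] using ha0

theorem IsProjPt.infDist_eq {H : Type*} [MetricSpace H] {C : Set H} {x p : H}
    (h : IsProjPt C x p) : Metric.infDist x C = dist x p :=
  le_antisymm (Metric.infDist_le_dist_of_mem h.1)
    ((Metric.le_infDist ⟨p, h.1⟩).2 fun {c} hc => h.2 c hc)

theorem IsProjPt.sq_dist_le {H : Type*} [MetricSpace H] [CompleteSpace H] (hH : HadamardSpace H)
    {C : Set H} (hC : GeodesicConvex C) {x p y : H} (hp : IsProjPt C x p) (hy : y ∈ C) :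
    dist p y ^ 2 ≤ 2 * (dist x y ^ 2 - dist x p ^ 2) := by
  obtain ⟨γ, hγ, rfl, rfl⟩ := hH.geodesic p y
  have ht : (1 / 2 : ℝ) ∈ Set.Icc (0 : ℝ) 1 := by norm_num
  have h1 := hH.cat0 x γ hγ _ ht
  have h2 := pow_le_pow_left₀ dist_nonneg (hp.2 _ (hC γ hγ hp.1 hy _ ht)) 2
  linarith

/-- The limit of a weakly convergent sequence that meets the sets `Cn` frequently belongs to the
Mosco limit of these sets. -/
theorem MoscoConv.mem_of_frequently_mem {H : Type*} [MetricSpace H] {C : Set H} {Cn : ℕ → Set H}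
    (hM : MoscoConv (fun n => indicatorE (Cn n)) (indicatorE C)) {w : ℕ → H} {c : H}
    (hb : Bornology.IsBounded (Set.range w)) (hw : WeakConvSeq w c)
    (hfreq : ∃ᶠ n in atTop, w n ∈ Cn n) : c ∈ C := by
  by_contra hcC
  have h := hM.1 c w hb hw
  have hc : indicatorE C c = ⊤ := if_neg hcC
  rw [hc] at h
  have hev := eventually_lt_of_lt_liminf (lt_of_lt_of_le EReal.zero_lt_top h)
  obtain ⟨n, hn, hlt⟩ := (hfreq.and_eventually hev).exists
  simp [indicatorE, hn] at hlt

theorem MoscoConv.exists_tendsto_eventually_mem {H : Type*} [MetricSpace H] {C : Set H}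
    {Cn : ℕ → Set H} (hM : MoscoConv (fun n => indicatorE (Cn n)) (indicatorE C)) {p : H}
    (hp : p ∈ C) : ∃ v : ℕ → H, Tendsto v atTop (𝓝 p) ∧ ∀ᶠ n in atTop, v n ∈ Cn n := by
  obtain ⟨v, hv, hind⟩ := hM.2 p
  refine ⟨v, hv, ?_⟩
  have hp0 : indicatorE C p = 0 := if_pos hp
  rw [hp0] at hind
  filter_upwards [hind.eventually_lt_const EReal.zero_lt_top] with n hn
  by_contra hnot
  simp [indicatorE, hnot] at hn

/-- Distances to the sets `Cn` are asymptotically at least the distance to their Mosco limit. -/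
theorem MoscoConv.eventually_lt_dist {H : Type*} [MetricSpace H] [CompleteSpace H]
    (hH : HadamardSpace H) {C : Set H} {Cn : ℕ → Set H}
    (hM : MoscoConv (fun n => indicatorE (Cn n)) (indicatorE C)) {x p : H}
    (hp : IsProjPt C x p) {q : ℕ → H} (hq : ∀ n, q n ∈ Cn n) {a : ℝ} (ha : a < dist x p) :
    ∀ᶠ n in atTop, a < dist x (q n) := by
  by_contra hnot
  rw [not_eventually] at hnot
  let T : Set ℕ := {n | ¬ a < dist x (q n)}
  let u : ℕ → H := fun n => if n ∈ T then q n else x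
  have huT : ∀ n ∈ T, u n = q n := fun n hn => if_pos hn
  have ha0 : 0 ≤ a := by
    obtain ⟨n, hn⟩ := hnot.exists
    exact dist_nonneg.trans (not_lt.1 hn)
  have hu : ∀ n, dist x (u n) ≤ a := by
    intro n
    by_cases hn : n ∈ T
    · rw [huT n hn]; exact not_lt.1 hn
    · simpa [u, hn] using ha0
  obtain ⟨c, S, hST, hS, hdist, hw⟩ := exists_weakConvSeq_piecewise hH hu (T := T) hnot
  have : (atTop ⊓ 𝓟 S).NeBot := frequently_mem_iff_neBot.1 hS
  have hcC : c ∈ C := by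
    refine hM.mem_of_frequently_mem ?_ hw (hS.mono fun n hn => ?_)
    · refine (Metric.isBounded_iff_subset_closedBall x).2 ⟨max a (dist c x), ?_⟩
      rintro _ ⟨n, rfl⟩
      by_cases hn : n ∈ S
      · simp [hn, dist_comm _ x, hu n]
      · simp [hn]
    · simpa [hn, huT n (hST hn)] using hq n
  have h1 : dist c x ^ 2 ≤ a ^ 2 := (hdist x).trans
    (limsupSqDist_le (Eventually.of_forall fun n => pow_le_pow_left₀ dist_nonneg (hu n) 2))
  have h2 := hp.2 c hcC
  rw [dist_comm] at h1
  linarith [(pow_le_pow_iff_left₀ dist_nonneg ha0 two_ne_zero).1 h1]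

/-- Mosco convergence of nonempty closed convex sets in a Hadamard space
implies convergence of distance functions and of metric projections. -/
theorem mosco_sets_implies_dist_and_proj_convergence
    {H : Type*} [MetricSpace H] [CompleteSpace H] (hH : HadamardSpace H)
    (C : Set H) (Cn : ℕ → Set H)
    (hCne : C.Nonempty) (hCcl : IsClosed C) (hCcv : GeodesicConvex C)
    (hCnne : ∀ n, (Cn n).Nonempty) (hCncl : ∀ n, IsClosed (Cn n))
    (hCncv : ∀ n, GeodesicConvex (Cn n))
    (hM : MoscoConv (fun n => indicatorE (Cn n)) (indicatorE C))
    (P : H → H) (Pn : ℕ → H → H)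
    (hP : ∀ x : H, IsProjPt C x (P x)) (hPn : ∀ n, ∀ x : H, IsProjPt (Cn n) x (Pn n x)) :
    ∀ x : H,
      Tendsto (fun n => Metric.infDist x (Cn n)) atTop (𝓝 (Metric.infDist x C)) ∧
      Tendsto (fun n => Pn n x) atTop (𝓝 (P x)) := by
  intro x
  obtain ⟨v, hv, hvmem⟩ := hM.exists_tendsto_eventually_mem (hP x).1
  have hxv : Tendsto (fun n => dist x (v n)) atTop (𝓝 (dist x (P x))) :=
    tendsto_const_nhds.dist hv
  have hdist : Tendsto (fun n => dist x (Pn n x)) atTop (𝓝 (dist x (P x))) := by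
    refine tendsto_order.2 ⟨fun a ha => ?_, fun a ha => ?_⟩
    · exact hM.eventually_lt_dist hH (hP x) (fun n => (hPn n x).1) ha
    · filter_upwards [hvmem, hxv.eventually_lt_const ha] with n hn hlt
      exact ((hPn n x).2 _ hn).trans_lt hlt
  refine ⟨?_, ?_⟩
  · simpa only [(hP x).infDist_eq, (hPn _ x).infDist_eq] using hdist
  have hsqrt : Tendsto (fun n => √(2 * (dist x (v n) ^ 2 - dist x (Pn n x) ^ 2))) atTop (𝓝 0) := by
    simpa using (((hxv.pow 2).sub (hdist.pow 2)).const_mul 2).sqrt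
  have hclose : Tendsto (fun n => dist (v n) (Pn n x)) atTop (𝓝 0) := by
    refine squeeze_zero' (Eventually.of_forall fun n => dist_nonneg) ?_ hsqrt
    filter_upwards [hvmem] with n hn
    rw [dist_comm]
    exact Real.le_sqrt_of_sq_le ((hPn n x).sq_dist_le hH (hCncv n) hn)
  exact hv.congr_dist hclose
end

section
/- In a Hadamard space (H,d), every bounded sequence has a weakly convergent subsequence; equivalently, every bounded sequence has a weak cluster point. -/
open Filter Topology
open scoped Classical

section Regularity

/-- In a preorder whose antitone sequences have lower bounds, a monotone real function bounded
below is constant below some point. -/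
theorem exists_forall_le_eq_of_antitone_seq_bddBelow {P : Type*} [Preorder P] [Nonempty P]
    (hP : ∀ u : ℕ → P, Antitone u → ∃ p, ∀ k, p ≤ u k)
    {r : P → ℝ} (hr : Monotone r) (hb : BddBelow (Set.range r)) :
    ∃ p, ∀ q ≤ p, r q = r p := by
  have hbdd : ∀ p, BddBelow (r '' Set.Iic p) := fun p => hb.mono (Set.image_subset_range _ _)
  have hstep : ∀ (k : ℕ) (p : P), ∃ q ≤ p, ∀ s ≤ p, r q < r s + 1 / ((k : ℝ) + 1) := by
    intro k p
    have hk : (0 : ℝ) < 1 / ((k : ℝ) + 1) := Nat.one_div_pos_of_nat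
    obtain ⟨_, ⟨q, hq, rfl⟩, hlt⟩ := exists_lt_of_csInf_lt
      (Set.nonempty_Iic.image r) (lt_add_of_pos_right (sInf (r '' Set.Iic p)) hk)
    refine ⟨q, hq, fun s hs => hlt.trans_le ?_⟩
    gcongr
    exact csInf_le (hbdd p) ⟨s, hs, rfl⟩
  choose next hle hnext using hstep
  let u : ℕ → P := fun n => Nat.rec (Classical.arbitrary P) next n
  obtain ⟨p, hp⟩ := hP u (antitone_nat_of_succ_le fun k => hle k (u k))
  refine ⟨p, fun q hq => le_antisymm (hr hq) ?_⟩
  have hlim : Tendsto (fun k : ℕ => r q + 1 / ((k : ℝ) + 1)) atTop (𝓝 (r q)) := by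
    simpa using (tendsto_one_div_add_atTop_nhds_zero_nat (𝕜 := ℝ)).const_add (r q)
  refine ge_of_tendsto' hlim fun k => ?_
  exact (hr (hp (k + 1))).trans (hnext k (u k) q (hq.trans (hp k))).le

end Regularity

section Minimizer

/-- A continuous function bounded below on a complete metric space that is uniformly convex at
midpoints attains its infimum. -/
theorem exists_forall_le_of_midpoint_convex {H : Type*} [MetricSpace H] [CompleteSpace H]
    [Nonempty H] {f : H → ℝ} (hf : Continuous f) (hb : BddBelow (Set.range f))
    (hmid : ∀ a b, ∃ m, f m ≤ (f a + f b) / 2 - dist a b ^ 2 / 4) :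
    ∃ c, ∀ y, f c ≤ f y := by
  set r := sInf (Set.range f)
  have hr : ∀ y, r ≤ f y := fun y => csInf_le hb ⟨y, rfl⟩
  have hne : (comap f (𝓝 r)).NeBot := by
    rw [comap_neBot_iff_frequently]
    exact mem_closure_iff_frequently.1 (csInf_mem_closure (Set.range_nonempty f) hb)
  have hcauchy : Cauchy (comap f (𝓝 r)) := by
    refine Metric.cauchy_iff.2 ⟨hne, fun ε hε => ?_⟩
    refine ⟨f ⁻¹' Set.Iio (r + ε ^ 2 / 4), preimage_mem_comap (Iio_mem_nhds (by
      have : 0 < ε ^ 2 := by positivity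
      linarith)), fun a ha b hb => ?_⟩
    obtain ⟨m, hm⟩ := hmid a b
    have ha : f a < r + ε ^ 2 / 4 := ha
    have hb : f b < r + ε ^ 2 / 4 := hb
    have := hr m
    exact lt_of_pow_lt_pow_left₀ 2 hε.le (by linarith)
  obtain ⟨c, hc⟩ := CompleteSpace.complete hcauchy
  have hfc : f c = r := tendsto_nhds_unique ((hf.tendsto c).mono_left hc) tendsto_comap
  exact ⟨c, fun y => hfc.le.trans (hr y)⟩

end Minimizer

section AsymptoticRadius

variable {H ι : Type*} [MetricSpace H] {x : ι → H} {F G : Filter ι}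

/-- The function `y ↦ limsup d(y, x_i)²` along a filter. -/
noncomputable def asymptoticDistSq (x : ι → H) (F : Filter ι) (y : H) : ℝ :=
  limsup (fun i => dist y (x i) ^ 2) F

/-- The infimum of `y ↦ limsup d(y, x_i)²`. -/
noncomputable def asymptoticRadiusSq (x : ι → H) (F : Filter ι) : ℝ :=
  ⨅ y, asymptoticDistSq x F y

theorem exists_dist_le_of_isBounded_range (hx : Bornology.IsBounded (Set.range x)) (y : H) :
    ∃ K, 0 ≤ K ∧ ∀ i, dist y (x i) ≤ K := by
  obtain ⟨K, hK⟩ := hx.subset_closedBall y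
  refine ⟨max K 0, le_max_right _ _, fun i => ?_⟩
  rw [dist_comm]
  exact (hK ⟨i, rfl⟩).trans (le_max_left _ _)

theorem isBoundedUnder_dist_sq (hx : Bornology.IsBounded (Set.range x)) (F : Filter ι) (y : H) :
    F.IsBoundedUnder (· ≤ ·) fun i => dist y (x i) ^ 2 := by
  obtain ⟨K, -, hK⟩ := exists_dist_le_of_isBounded_range hx y
  exact isBoundedUnder_of ⟨K ^ 2, fun i => by gcongr; exact hK i⟩

theorem isCoboundedUnder_dist_sq (x : ι → H) (F : Filter ι) [F.NeBot] (y : H) :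
    F.IsCoboundedUnder (· ≤ ·) fun i => dist y (x i) ^ 2 :=
  isCoboundedUnder_le_of_le F fun _ => sq_nonneg _

theorem asymptoticDistSq_nonneg (hx : Bornology.IsBounded (Set.range x)) [F.NeBot] (y : H) :
    0 ≤ asymptoticDistSq x F y :=
  le_limsup_of_frequently_le (Frequently.of_forall fun _ => sq_nonneg _)
    (isBoundedUnder_dist_sq hx F y)

theorem asymptoticDistSq_mono (hx : Bornology.IsBounded (Set.range x)) [F.NeBot] (h : F ≤ G)
    (y : H) : asymptoticDistSq x F y ≤ asymptoticDistSq x G y :=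
  limsup_le_limsup_of_le h (isCoboundedUnder_dist_sq x F y) (isBoundedUnder_dist_sq hx G y)

theorem bddBelow_range_asymptoticDistSq (hx : Bornology.IsBounded (Set.range x)) [F.NeBot] :
    BddBelow (Set.range (asymptoticDistSq x F)) :=
  ⟨0, Set.forall_mem_range.2 fun y => asymptoticDistSq_nonneg hx y⟩

theorem asymptoticRadiusSq_mono (hx : Bornology.IsBounded (Set.range x)) [F.NeBot]
    (h : F ≤ G) : asymptoticRadiusSq x F ≤ asymptoticRadiusSq x G :=
  ciInf_mono (bddBelow_range_asymptoticDistSq hx) (asymptoticDistSq_mono hx h)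

theorem eventually_dist_sq_lt (hx : Bornology.IsBounded (Set.range x)) (F : Filter ι) (y : H)
    {ε : ℝ} (hε : 0 < ε) : ∀ᶠ i in F, dist y (x i) ^ 2 < asymptoticDistSq x F y + ε :=
  eventually_lt_of_limsup_lt (lt_add_of_pos_right _ hε) (isBoundedUnder_dist_sq hx F y)

theorem asymptoticDistSq_le_add [F.NeBot] (hx : Bornology.IsBounded (Set.range x)) {a : H}
    {K : ℝ} (hK : ∀ i, dist a (x i) ≤ K) (b : H) :
    asymptoticDistSq x F a ≤ asymptoticDistSq x F b + 2 * dist a b * K := by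
  refine le_of_forall_pos_le_add fun ε hε => ?_
  refine limsup_le_of_le (isCoboundedUnder_dist_sq x F a) ?_
  filter_upwards [eventually_dist_sq_lt hx F b hε] with i hi
  have h₁ : 2 * dist a b * dist a (x i) ≤ 2 * dist a b * K := by
    gcongr
    exact hK i
  have h₂ := dist_triangle a b (x i)
  have h₃ : dist a (x i) ^ 2 ≤ dist b (x i) ^ 2 + 2 * dist a b * dist a (x i) := by
    rcases le_total (dist a (x i)) (dist a b) with h | h
    · nlinarith [sq_nonneg (dist b (x i)), dist_nonneg (x := a) (y := x i)]
    · nlinarith [sq_nonneg (dist a b), dist_nonneg (x := b) (y := x i)]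
  linarith

theorem continuous_asymptoticDistSq (hx : Bornology.IsBounded (Set.range x)) [F.NeBot] :
    Continuous (asymptoticDistSq x F) := by
  refine continuous_iff_continuousAt.2 fun a => ?_
  obtain ⟨K, hK₀, hK⟩ := exists_dist_le_of_isBounded_range hx a
  have hlim : Tendsto (fun b => 2 * dist b a * (K + dist b a)) (𝓝 a) (𝓝 0) := by
    have : Continuous fun b => 2 * dist b a * (K + dist b a) := by fun_prop
    simpa using this.tendsto a
  refine tendsto_iff_dist_tendsto_zero.2 (squeeze_zero (fun _ => dist_nonneg) (fun b => ?_) hlim)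
  have h₁ := asymptoticDistSq_le_add (F := F) hx hK b
  have h₂ := asymptoticDistSq_le_add (F := F) hx (a := b) (K := K + dist b a)
    (fun i => by linarith [dist_triangle b a (x i), hK i]) a
  rw [dist_comm a b] at h₁
  rw [Real.dist_eq, abs_sub_le_iff]
  constructor
  · linarith
  · nlinarith [mul_self_nonneg (dist b a)]

variable [CompleteSpace H]

theorem HadamardSpace.exists_midpoint (hH : HadamardSpace H) (a b : H) :
    ∃ m, ∀ y, dist y m ^ 2 ≤ (dist y a ^ 2 + dist y b ^ 2) / 2 - dist a b ^ 2 / 4 := by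
  obtain ⟨γ, hγ, rfl, rfl⟩ := hH.geodesic a b
  refine ⟨γ (1 / 2), fun y => ?_⟩
  linarith [hH.cat0 y γ hγ (1 / 2) (by norm_num)]

theorem HadamardSpace.exists_asymptoticDistSq_le (hH : HadamardSpace H)
    (hx : Bornology.IsBounded (Set.range x)) (F : Filter ι) [F.NeBot] :
    ∃ c, ∀ y, asymptoticDistSq x F c ≤ asymptoticDistSq x F y := by
  have : Nonempty H := F.nonempty_of_neBot.map x
  refine exists_forall_le_of_midpoint_convex (continuous_asymptoticDistSq hx)
    (bddBelow_range_asymptoticDistSq hx) fun a b => ?_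
  obtain ⟨m, hm⟩ := hH.exists_midpoint a b
  refine ⟨m, le_of_forall_pos_le_add fun ε hε => ?_⟩
  refine limsup_le_of_le (isCoboundedUnder_dist_sq x F m) ?_
  filter_upwards [eventually_dist_sq_lt hx F a hε, eventually_dist_sq_lt hx F b hε] with i ha hb
  have := hm (x i)
  simp only [dist_comm (x i)] at this
  linarith

end AsymptoticRadius

/-- Every bounded sequence has a subsequence whose further subsequences all have the same
asymptotic radius. -/
theorem exists_strictMono_asymptoticRadiusSq_eq {H : Type*} [MetricSpace H] {x : ℕ → H}
    (hx : Bornology.IsBounded (Set.range x)) :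
    ∃ φ : ℕ → ℕ, StrictMono φ ∧ ∀ ψ : ℕ → ℕ, StrictMono ψ →
      asymptoticRadiusSq x (map (φ ∘ ψ) atTop) = asymptoticRadiusSq x (map φ atTop) := by
  let P := {F : Filter ℕ // F.NeBot ∧ F.IsCountablyGenerated ∧ F ≤ atTop}
  have : Nonempty P := ⟨⟨atTop, inferInstance, inferInstance, le_rfl⟩⟩
  obtain ⟨⟨F, hF₁, hF₂, hF₃⟩, hF⟩ := exists_forall_le_eq_of_antitone_seq_bddBelow (P := P)
    (r := fun F => asymptoticRadiusSq x F.1)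
    (fun u hu => by
      have hne := fun k => (u k).2.1
      have := fun k => (u k).2.2.1
      exact ⟨⟨⨅ k, (u k).1, iInf_neBot_of_directed (Antitone.directed_ge hu) hne,
        inferInstance, (iInf_le _ 0).trans (u 0).2.2.2⟩, fun k => iInf_le (fun k => (u k).1) k⟩)
    (fun F G h => have := F.2.1; asymptoticRadiusSq_mono hx h)
    ⟨0, Set.forall_mem_range.2 fun F =>
      have := F.2.1; Real.iInf_nonneg fun y => asymptoticDistSq_nonneg hx y⟩
  obtain ⟨u, hu⟩ := exists_seq_tendsto F
  obtain ⟨θ, hθ, huθ⟩ := strictMono_subseq_of_tendsto_atTop (hu.mono_right hF₃)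
  have hφ : Tendsto (u ∘ θ) atTop F := hu.comp hθ.tendsto_atTop
  have hconst : ∀ v : ℕ → ℕ, Tendsto v atTop F →
      asymptoticRadiusSq x (map v atTop) = asymptoticRadiusSq x F := fun v hv =>
    hF ⟨map v atTop, inferInstance, inferInstance, le_trans hv hF₃⟩ hv
  exact ⟨u ∘ θ, huθ, fun ψ hψ =>
    (hconst _ (hφ.comp hψ.tendsto_atTop)).trans (hconst _ hφ).symm⟩

/-- In a Hadamard space, every bounded sequence has a weakly convergent
subsequence (i.e. a weak cluster point). -/
theorem bounded_seq_has_weakly_convergent_subseq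
    {H : Type*} [MetricSpace H] [CompleteSpace H] (hH : HadamardSpace H)
    (x : ℕ → H) (hx : Bornology.IsBounded (Set.range x)) :
    ∃ φ : ℕ → ℕ, StrictMono φ ∧ ∃ c : H, WeakConvSeq (x ∘ φ) c := by
  obtain ⟨φ, hφ, hreg⟩ := exists_strictMono_asymptoticRadiusSq_eq hx
  obtain ⟨c, hc⟩ := hH.exists_asymptoticDistSq_le hx (map φ atTop)
  refine ⟨φ, hφ, c, fun ψ hψ y => ?_⟩
  have : Nonempty H := ⟨c⟩
  calc asymptoticDistSq x (map (φ ∘ ψ) atTop) c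
      ≤ asymptoticDistSq x (map φ atTop) c := by
        refine asymptoticDistSq_mono hx ?_ c
        rw [← Filter.map_map]
        exact map_mono hψ.tendsto_atTop
    _ ≤ asymptoticRadiusSq x (map φ atTop) := le_ciInf hc
    _ = asymptoticRadiusSq x (map (φ ∘ ψ) atTop) := (hreg ψ hψ).symm
    _ ≤ asymptoticDistSq x (map (φ ∘ ψ) atTop) y :=
        ciInf_le (bddBelow_range_asymptoticDistSq hx) y
end
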